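/- arXiv:1905.07829 — 5 statements merged into one kernel-verified Lean document; each statement's English description precedes it below -/
import Mathlib

section
/- Let G be the simple graph on vertex set {1,...,6} with edge set {{1,2},{1,3},{2,3},{1,4},{4,6},{3,6},{5,6},{2,5}}. Then for every injective map φ : {1,...,6} → ℝ² satisfying dist(φ(i), φ(j)) = 1 for every edge {i,j} of G, one has dist(φ(4), φ(5)) = 1. (That is, G is a totally unfaithful unit-distance graph: the non-adjacent pair {4,5} is at distance 1 in every embedding.) -/
/-!
The cycles `1 3 6 4` and `2 3 6 5` are rhombi sharing the side `36`. In the plane a rhombus with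
distinct opposite vertices is a parallelogram, so the translation taking `3` to `6` takes `1` to `4`
and `2` to `5`; hence `45` is as long as `12`.
-/

open Module

theorem eq_midpoint_of_dist_eq_dist_midpoint {E P : Type*} [NormedAddCommGroup E]
    [NormedSpace ℝ E] [StrictConvexSpace ℝ E] [MetricSpace P] [NormedAddTorsor E P] {x y z : P}
    (hx : dist x y = dist x (midpoint ℝ x z)) (hz : dist y z = dist (midpoint ℝ x z) z) :
    y = midpoint ℝ x z := by
  apply eq_midpoint_of_dist_eq_half
  · rw [hx, dist_left_midpoint, Real.norm_ofNat, inv_mul_eq_div]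
  · rw [hz, dist_midpoint_right, Real.norm_ofNat, inv_mul_eq_div]

section EuclideanPlane

variable {V P : Type*} [NormedAddCommGroup V] [InnerProductSpace ℝ V] [MetricSpace P]
  [NormedAddTorsor V P]

theorem vsub_eq_vsub_of_rhombus (hV : finrank ℝ V = 2) {a b c d : P} {r : ℝ} (hac : a ≠ c)
    (hbd : b ≠ d) (hab : dist a b = r) (hbc : dist b c = r) (hdc : dist d c = r)
    (had : dist a d = r) : a -ᵥ b = d -ᵥ c := by
  have : FiniteDimensional ℝ V := .of_finrank_eq_succ hV
  rw [dist_comm] at hbc hdc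
  let σ := AffineIsometryEquiv.pointReflection ℝ (midpoint ℝ b d)
  have hσb : σ b = d := AffineIsometryEquiv.pointReflection_midpoint_left b d
  have hσd : σ d = b := AffineIsometryEquiv.pointReflection_midpoint_right b d
  have hσab : dist (σ a) b = r := by rw [← hσd, σ.dist_map, had]
  have hσad : dist (σ a) d = r := by rw [← hσb, σ.dist_map, hab]
  -- The half-turn `σ` swaps the circles of radius `r` about `b` and `d`, whose common points are
  -- `a` and `c`, so it permutes these two.
  obtain hσa | hσa : σ a = a ∨ σ a = c :=
    EuclideanGeometry.eq_of_dist_eq_of_dist_eq_of_finrank_eq_two hV hbd hac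
      hab hbc hσab had hdc hσad
  · have ha : a = midpoint ℝ b d := AffineIsometryEquiv.pointReflection_fixed_iff.mp hσa
    have hc : c = midpoint ℝ b d := eq_midpoint_of_dist_eq_dist_midpoint
      (by rw [← ha, dist_comm, hbc, dist_comm, hab]) (by rw [← ha, hdc, had])
    exact absurd (ha.trans hc.symm) hac
  · rw [← midpoint_eq_midpoint_iff_vsub_eq_vsub ℝ]
    exact midpoint_eq_iff.mpr hσa

theorem totally_unfaithful_six_general (hV : finrank ℝ V = 2) {p₁ p₂ p₃ p₄ p₅ p₆ : P} {r : ℝ}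
    (hne₁₆ : p₁ ≠ p₆) (hne₃₄ : p₃ ≠ p₄) (hne₂₆ : p₂ ≠ p₆) (hne₃₅ : p₃ ≠ p₅)
    (h₁₃ : dist p₁ p₃ = r) (h₂₃ : dist p₂ p₃ = r) (h₁₄ : dist p₁ p₄ = r) (h₄₆ : dist p₄ p₆ = r)
    (h₃₆ : dist p₃ p₆ = r) (h₅₆ : dist p₅ p₆ = r) (h₂₅ : dist p₂ p₅ = r) :
    dist p₄ p₅ = dist p₁ p₂ := by
  have h₁₃₆₄ : p₁ -ᵥ p₃ = p₄ -ᵥ p₆ := vsub_eq_vsub_of_rhombus hV hne₁₆ hne₃₄ h₁₃ h₃₆ h₄₆ h₁₄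
  have h₂₃₆₅ : p₂ -ᵥ p₃ = p₅ -ᵥ p₆ := vsub_eq_vsub_of_rhombus hV hne₂₆ hne₃₅ h₂₃ h₃₆ h₅₆ h₂₅
  calc
    dist p₄ p₅ = dist (p₄ -ᵥ p₆) (p₅ -ᵥ p₆) := (dist_vsub_cancel_right p₄ p₅ p₆).symm
    _ = dist (p₁ -ᵥ p₃) (p₂ -ᵥ p₃) := by rw [h₁₃₆₄, h₂₃₆₅]
    _ = dist p₁ p₂ := dist_vsub_cancel_right p₁ p₂ p₃

end EuclideanPlane

theorem totally_unfaithful_six :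
    ∀ φ : ℕ → EuclideanSpace ℝ (Fin 2),
    Set.InjOn φ (Set.Icc 1 6) →
    dist (φ 1) (φ 2) = 1 →
    dist (φ 1) (φ 3) = 1 →
    dist (φ 2) (φ 3) = 1 →
    dist (φ 1) (φ 4) = 1 →
    dist (φ 4) (φ 6) = 1 →
    dist (φ 3) (φ 6) = 1 →
    dist (φ 5) (φ 6) = 1 →
    dist (φ 2) (φ 5) = 1 →
    dist (φ 4) (φ 5) = 1 := by
  intro φ hφ h₁₂ h₁₃ h₂₃ h₁₄ h₄₆ h₃₆ h₅₆ h₂₅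
  have hne₁₆ : φ 1 ≠ φ 6 := hφ.ne (by simp) (by simp) (by simp)
  have hne₃₄ : φ 3 ≠ φ 4 := hφ.ne (by simp) (by simp) (by simp)
  have hne₂₆ : φ 2 ≠ φ 6 := hφ.ne (by simp) (by simp) (by simp)
  have hne₃₅ : φ 3 ≠ φ 5 := hφ.ne (by simp) (by simp) (by simp)
  exact (totally_unfaithful_six_general finrank_euclideanSpace_fin
    hne₁₆ hne₃₄ hne₂₆ hne₃₅ h₁₃ h₂₃ h₁₄ h₄₆ h₃₆ h₅₆ h₂₅).trans h₁₂
end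

section
/- Let G be a simple graph on at most 5 vertices. Then G is unit-distance if and only if G contains no subgraph isomorphic to the complete graph K₄ and no subgraph isomorphic to the complete bipartite graph K_{2,3}. (Containing a subgraph isomorphic to H means: there exists an injective map from the vertices of H into the vertices of G carrying every edge of H to an edge of G.) -/
/-- `G` contains a subgraph isomorphic to `H`: an injective map from the
vertices of `H` to the vertices of `G` carrying edges of `H` to edges of `G`. -/
def ContainsSub {α V : Type*} (H : SimpleGraph α) (G : SimpleGraph V) : Prop :=
  ∃ f : α → V, Function.Injective f ∧ ∀ a b, H.Adj a b → G.Adj (f a) (f b)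

/-- `G` is a unit-distance graph. -/
def IsUnitDistance {V : Type*} (G : SimpleGraph V) : Prop :=
  ∃ φ : V → EuclideanSpace ℝ (Fin 2), Function.Injective φ ∧
    ∀ v w, G.Adj v w → dist (φ v) (φ w) = 1

/-
In the plane, four points at mutual distance 1 would be affinely independent, and two unit circles
meet in at most two points; this excludes `K₄` and `K_{2,3}`. For the converse, add isolated
vertices until there are five. As `G` is `K₄`-free, no single vertex covers all edges of `Gᶜ`; as it
is `K_{2,3}`-free, no pair of vertices is cut off from the other three in `Gᶜ`. The first fact gives
a triangle or two disjoint edges in `Gᶜ`, and the second extends them to a path on four vertices.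
That path is self-complementary, so `G` is a subgraph of the fan over a four-vertex path, which is
drawn as three consecutive equilateral triangles of a regular hexagon.
-/

section

open SimpleGraph Module

theorem containsSub_iff_isContained {α V : Type*} {H : SimpleGraph α} {G : SimpleGraph V} :
    ContainsSub H G ↔ H ⊑ G :=
  ⟨fun ⟨f, hf, hadj⟩ ↦ ⟨⟨f, hadj _ _⟩, hf⟩,
    fun ⟨f⟩ ↦ ⟨f, f.injective, fun _ _ hab ↦ f.toHom.map_adj hab⟩⟩

theorem isUnitDistance_iff_nonempty_unitDistEmbedding {V : Type*} {G : SimpleGraph V} :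
    IsUnitDistance G ↔ Nonempty (G.UnitDistEmbedding (EuclideanSpace ℝ (Fin 2))) :=
  ⟨fun ⟨φ, hφ, hdist⟩ ↦ ⟨⟨φ, hφ⟩, hdist _ _⟩,
    fun ⟨U⟩ ↦ ⟨U.p, U.p.injective, fun _ _ hvw ↦ U.unit_dist hvw⟩⟩

theorem IsUnitDistance.of_isContained {V W : Type*} {G : SimpleGraph V} {H : SimpleGraph W}
    (hH : IsUnitDistance H) (hGH : G ⊑ H) : IsUnitDistance G := by
  rw [isUnitDistance_iff_nonempty_unitDistEmbedding] at hH ⊢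
  exact hH.map2 UnitDistEmbedding.copy hGH

theorem isUnitDistance_of_unitDistEmbedding_complex {V : Type*} {G : SimpleGraph V}
    (U : G.UnitDistEmbedding ℂ) : IsUnitDistance G := by
  let e : ℂ ≃ₗᵢ[ℝ] EuclideanSpace ℝ (Fin 2) := Complex.orthonormalBasisOneI.repr
  exact ⟨e ∘ U.p, e.injective.comp U.p.injective,
    fun v w hvw ↦ (e.dist_map _ _).trans (U.unit_dist hvw)⟩

section Obstructions

variable {E P : Type*} [NormedAddCommGroup E] [InnerProductSpace ℝ E] [MetricSpace P]
  [NormedAddTorsor E P]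

theorem norm_weightedVSub_sq_of_pairwise_dist_eq {ι : Type*} {p : ι → P} {r : ℝ}
    (hp : Pairwise fun i j ↦ dist (p i) (p j) = r) {s : Finset ι} {w : ι → ℝ}
    (hw : ∑ i ∈ s, w i = 0) : ‖s.weightedVSub p w‖ ^ 2 = r ^ 2 / 2 * ∑ i ∈ s, w i ^ 2 := by
  classical
  have hdist (i j : ι) :
      dist (p i) (p j) * dist (p i) (p j) = r ^ 2 - if i = j then r ^ 2 else 0 := by
    split_ifs with hij
    · simp [hij]
    · rw [hp hij]
      ring
  have hdiag : ∑ i ∈ s, ∑ j ∈ s, w i * w j * (if i = j then r ^ 2 else 0) =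
      r ^ 2 * ∑ i ∈ s, w i ^ 2 := by
    rw [Finset.mul_sum]
    refine Finset.sum_congr rfl fun i hi ↦ ?_
    simp only [mul_ite, mul_zero, Finset.sum_ite_eq, if_pos hi]
    ring
  have hconst : ∑ i ∈ s, ∑ j ∈ s, w i * w j * r ^ 2 = 0 := by
    simp only [← Finset.sum_mul, ← Finset.mul_sum, hw, mul_zero, zero_mul, Finset.sum_const_zero]
  rw [← real_inner_self_eq_norm_sq, EuclideanGeometry.inner_weightedVSub p hw p hw]
  simp only [hdist, mul_sub, Finset.sum_sub_distrib, hdiag, hconst]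
  ring

theorem affineIndependent_of_pairwise_dist_eq {ι : Type*} {p : ι → P} {r : ℝ} (hr : r ≠ 0)
    (hp : Pairwise fun i j ↦ dist (p i) (p j) = r) : AffineIndependent ℝ p := by
  intro s w hw hsum i hi
  have hsq : r ^ 2 / 2 * ∑ i ∈ s, w i ^ 2 = 0 := by
    rw [← norm_weightedVSub_sq_of_pairwise_dist_eq hp hw, hsum, norm_zero, zero_pow two_ne_zero]
  have hsum_sq : ∑ i ∈ s, w i ^ 2 = 0 := (mul_eq_zero.mp hsq).resolve_left (by positivity)
  exact pow_eq_zero_iff two_ne_zero |>.mp <|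
    (Finset.sum_eq_zero_iff_of_nonneg fun i _ ↦ sq_nonneg (w i)).mp hsum_sq i hi

variable [FiniteDimensional ℝ E] {α β : Type*} [Fintype β]

theorem card_le_finrank_add_one_of_unitDistEmbedding_top
    (U : (⊤ : SimpleGraph β).UnitDistEmbedding P) : Fintype.card β ≤ finrank ℝ E + 1 :=
  have hU : AffineIndependent ℝ U.p :=
    affineIndependent_of_pairwise_dist_eq one_ne_zero fun _ _ hij ↦ U.unit_dist hij
  hU.card_le_finrank_succ.trans (Nat.succ_le_succ (Submodule.finrank_le _))

theorem card_le_two_of_unitDistEmbedding_completeBipartiteGraph [Nontrivial α]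
    (hE : finrank ℝ E = 2) (U : (completeBipartiteGraph α β).UnitDistEmbedding P) :
    Fintype.card β ≤ 2 := by
  by_contra! hβ
  obtain ⟨b₁, b₂, b, h₁₂, h₁, h₂⟩ := Fintype.two_lt_card_iff.mp hβ
  obtain ⟨a₁, a₂, ha⟩ := exists_pair_ne α
  have hdist (a : α) (b : β) : dist (U.p (.inr b)) (U.p (.inl a)) = 1 := U.unit_dist (by simp)
  have hcenters : U.p (.inl a₁) ≠ U.p (.inl a₂) := by simpa using ha
  have hpoints : U.p (.inr b₁) ≠ U.p (.inr b₂) := by simpa using h₁₂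
  have hmeet := EuclideanGeometry.eq_of_dist_eq_of_dist_eq_of_finrank_eq_two hE hcenters hpoints
    (hdist a₁ b₁) (hdist a₁ b₂) (hdist a₁ b) (hdist a₂ b₁) (hdist a₂ b₂) (hdist a₂ b)
  simp [h₁.symm, h₂.symm] at hmeet

end Obstructions

theorem not_isUnitDistance_completeGraph_four :
    ¬ IsUnitDistance (⊤ : SimpleGraph (Fin 4)) := by
  rw [isUnitDistance_iff_nonempty_unitDistEmbedding]
  rintro ⟨U⟩
  simpa using card_le_finrank_add_one_of_unitDistEmbedding_top U

theorem not_isUnitDistance_completeBipartiteGraph_two_three :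
    ¬ IsUnitDistance (completeBipartiteGraph (Fin 2) (Fin 3)) := by
  rw [isUnitDistance_iff_nonempty_unitDistEmbedding]
  rintro ⟨U⟩
  simpa using card_le_two_of_unitDistEmbedding_completeBipartiteGraph finrank_euclideanSpace_fin U

section Fan

/-- The fan over a path on `n` vertices: the path `Sum.inl 0, …, Sum.inl (n - 1)` together with an
apex `Sum.inr ()` adjacent to all of it. This join of the path and a point is encoded as the
complement of the disjoint union of their complements. -/
def fanGraph (n : ℕ) : SimpleGraph (Fin n ⊕ Unit) :=
  ((pathGraph n)ᶜ ⊕g (⊥ : SimpleGraph Unit))ᶜ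

theorem fanGraph_adj_inl_inl {n : ℕ} {i j : Fin n} :
    (fanGraph n).Adj (.inl i) (.inl j) ↔ i.val + 1 = j ∨ j.val + 1 = i := by
  rw [← pathGraph_adj]
  simp only [fanGraph, compl_adj, sum_adj_inl, ne_eq, Sum.inl.injEq, not_and, not_not]
  exact ⟨fun h ↦ h.2 h.1, fun h ↦ ⟨h.ne, fun _ ↦ h⟩⟩

variable {ω : ℂ}

theorem sub_one_eq_sq_of_isPrimitiveRoot_six (hω : IsPrimitiveRoot ω 6) : ω - 1 = ω ^ 2 := by
  have hroot : ω ^ 2 - ω + 1 = 0 := by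
    simpa [Polynomial.cyclotomic_six] using hω.isRoot_cyclotomic (by norm_num)
  linear_combination -hroot

theorem dist_pow_succ_pow_of_isPrimitiveRoot_six (hω : IsPrimitiveRoot ω 6) (k : ℕ) :
    dist (ω ^ (k + 1)) (ω ^ k) = 1 :=
  calc dist (ω ^ (k + 1)) (ω ^ k) = ‖ω ^ k * (ω - 1)‖ := by rw [dist_eq_norm]; ring_nf
    _ = ‖ω‖ ^ (k + 2) := by
      rw [sub_one_eq_sq_of_isPrimitiveRoot_six hω, ← pow_add, norm_pow]
    _ = 1 := by rw [hω.norm'_eq_one (by norm_num), one_pow]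

theorem isUnitDistance_fanGraph {n : ℕ} (hn : n ≤ 6) : IsUnitDistance (fanGraph n) := by
  obtain ⟨ω, hω⟩ : ∃ ω : ℂ, IsPrimitiveRoot ω 6 := ⟨_, Complex.isPrimitiveRoot_exp 6 (by norm_num)⟩
  have hnorm (k : ℕ) : ‖ω ^ k‖ = 1 := by rw [norm_pow, hω.norm'_eq_one (by norm_num), one_pow]
  let φ : Fin n ⊕ Unit → ℂ := Sum.elim (fun k ↦ ω ^ k.val) fun _ ↦ 0
  refine isUnitDistance_of_unitDistEmbedding_complex ⟨⟨φ, ?_⟩, ?_⟩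
  · refine Function.Injective.sumElim (fun i j hij ↦ Fin.ext ?_)
      (Function.injective_of_subsingleton _) fun k _ ↦ pow_ne_zero _ (hω.ne_zero (by norm_num))
    exact hω.pow_inj (i.isLt.trans_le hn) (j.isLt.trans_le hn) hij
  · rintro (i | _) (j | _) hadj
    · change dist (ω ^ i.val) (ω ^ j.val) = 1
      rcases fanGraph_adj_inl_inl.mp hadj with h | h
      · rw [← h, _root_.dist_comm, dist_pow_succ_pow_of_isPrimitiveRoot_six hω]
      · rw [← h, dist_pow_succ_pow_of_isPrimitiveRoot_six hω]
    · exact (dist_zero_right _).trans (hnorm i)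
    · exact (dist_zero_left _).trans (hnorm j)
    · exact (hadj.ne rfl).elim

end Fan

section Containment

variable {α β V W : Type*} {G : SimpleGraph V} {H : SimpleGraph W}

theorem isContained_of_isContained_sum_bot (hH : ∀ a, ¬ H.IsIsolated a)
    (h : H ⊑ G ⊕g (⊥ : SimpleGraph β)) : H ⊑ G := by
  obtain ⟨f⟩ := h
  have hleft (a : W) : ∃ v, f a = .inl v := by
    obtain ⟨b, hab⟩ : ∃ b, H.Adj a b := by simpa [IsIsolated] using hH a
    have hadj := f.toHom.map_adj hab
    rcases hfa : f a with v | x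
    · exact ⟨v, rfl⟩
    · rcases hfb : f b <;> simp [hfa, hfb] at hadj
  choose g hg using hleft
  refine ⟨⟨g, fun {a b} hab ↦ ?_⟩, fun a b hab ↦ f.injective (by simp_all)⟩
  simpa [hg] using f.toHom.map_adj hab

theorem not_isIsolated_completeBipartiteGraph [Nonempty α] [Nonempty β] (v : α ⊕ β) :
    ¬ (completeBipartiteGraph α β).IsIsolated v := by
  rw [← exists_adj_iff_not_isIsolated]
  cases v <;> simp

theorem sum_bot_isContained [Fintype V] [Fintype W] [Fintype β] (h : H ⊑ G)
    (hcard : Fintype.card W + Fintype.card β ≤ Fintype.card V) :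
    H ⊕g (⊥ : SimpleGraph β) ⊑ G := by
  classical
  obtain ⟨f⟩ := h
  have hcompl : Fintype.card β ≤ Fintype.card ↥(Set.range f)ᶜ := by
    rw [Fintype.card_compl_set, Set.card_range_of_injective (f := f) f.injective]
    omega
  obtain ⟨g⟩ := Function.Embedding.nonempty_of_card_le hcompl
  refine ⟨⟨Sum.elim f fun x ↦ g x, ?_⟩, f.injective.sumElim
    (Subtype.val_injective.comp g.injective) fun a x hax ↦ (g x).2 ⟨a, hax⟩⟩
  rintro (a | x) (b | y) hab
  · exact f.toHom.map_adj (by simpa using hab)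
  all_goals simp at hab

theorem compl_isContained_compl [Fintype V] [Fintype W] (h : H ⊑ G)
    (hcard : Fintype.card W = Fintype.card V) : Gᶜ ⊑ Hᶜ := by
  obtain ⟨f⟩ := h
  let e : W ≃ V :=
    .ofBijective f ((Fintype.bijective_iff_injective_and_card f).mpr ⟨f.injective, hcard⟩)
  refine ⟨⟨e.symm, fun {v w} hvw ↦ ?_⟩, e.symm.injective⟩
  refine (compl_adj ..).mpr ⟨e.symm.injective.ne hvw.1, fun hadj ↦ hvw.2 ?_⟩
  have hmap : G.Adj (e (e.symm v)) (e (e.symm w)) := f.toHom.map_adj hadj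
  simpa only [Equiv.apply_symm_apply] using hmap

theorem compl_pathGraph_four_isContained_pathGraph_four : (pathGraph 4)ᶜ ⊑ pathGraph 4 := by
  have hinj : Function.Injective (![1, 3, 0, 2] : Fin 4 → Fin 4) := by decide
  refine ⟨⟨![1, 3, 0, 2], fun {i j} ↦ ?_⟩, hinj⟩
  simp only [compl_adj, pathGraph_adj]
  revert i j
  decide

theorem isContained_fanGraph_four [Fintype V] (hV : Fintype.card V = 5)
    (hpath : pathGraph 4 ⊑ Gᶜ) : G ⊑ fanGraph 4 := by
  have hsum : (pathGraph 4)ᶜ ⊕g (⊥ : SimpleGraph Unit) ⊑ Gᶜ :=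
    sum_bot_isContained (compl_pathGraph_four_isContained_pathGraph_four.trans hpath) (by simp [hV])
  simpa only [fanGraph, compl_compl] using compl_isContained_compl hsum (by simp [hV])

end Containment

section FourVertexPath

variable {V : Type*} {G : SimpleGraph V}

theorem pathGraph_four_isContained {a b c d : V} (hab : G.Adj a b) (hbc : G.Adj b c)
    (hcd : G.Adj c d) (hac : a ≠ c) (hbd : b ≠ d) (had : a ≠ d) : pathGraph 4 ⊑ G := by
  have hpath : (Walk.cons hab (.cons hbc (.cons hcd .nil))).IsPath := by
    simp [Walk.cons_isPath_iff, hab.ne, hbc.ne, hcd.ne, hac, hbd, had]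
  exact hpath.isContained_pathGraph

theorem exists_triangle_or_disjoint_adj [Nonempty V] (hcover : ∀ x, ¬ G.IsVertexCover {x}) :
    (∃ a b c, G.Adj a b ∧ G.Adj b c ∧ G.Adj c a) ∨
      ∃ a b c d, G.Adj a b ∧ G.Adj c d ∧ a ≠ c ∧ a ≠ d ∧ b ≠ c ∧ b ≠ d := by
  have hedge (x : V) : ∃ u v, G.Adj u v ∧ u ≠ x ∧ v ≠ x := by
    simpa [IsVertexCover] using hcover x
  obtain ⟨a, b, hab, -, -⟩ := hedge (Classical.arbitrary V)
  by_contra! ⟨htriangle, hdisjoint⟩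
  obtain ⟨c, hbc, hca⟩ : ∃ c, G.Adj b c ∧ c ≠ a := by
    obtain ⟨u, v, huv, hu, hv⟩ := hedge a
    rcases eq_or_ne b u with rfl | hbu
    · exact ⟨v, huv, hv⟩
    · obtain rfl := hdisjoint a b u v hab huv hu.symm hv.symm hbu
      exact ⟨u, huv.symm, hu⟩
  obtain ⟨u, v, huv, hu, hv⟩ := hedge b
  have ha : a = u ∨ a = v := or_iff_not_imp_left.mpr fun hau ↦ by
    by_contra hav
    exact hv (hdisjoint a b u v hab huv hau hav hu.symm).symm
  have hc : c = u ∨ c = v := or_iff_not_imp_left.mpr fun hcu ↦ by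
    by_contra hcv
    exact hv (hdisjoint c b u v hbc.symm huv hcu hcv hu.symm).symm
  refine htriangle a b c hab hbc ?_
  rcases ha with rfl | rfl <;> rcases hc with rfl | rfl
  · exact (hca rfl).elim
  · exact huv.symm
  · exact huv
  · exact (hca rfl).elim

theorem exists_adj_of_disjoint_adj (hfree : ¬ pathGraph 4 ⊑ G) {a b c d : V}
    (hab : G.Adj a b) (hcd : G.Adj c d) (hac : a ≠ c) (had : a ≠ d) (hbc : b ≠ c) (hbd : b ≠ d)
    (hcut : ∀ s : Finset V, s.card = 2 → ∃ x ∈ s, ∃ y ∉ s, G.Adj x y) :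
    ∃ e, (G.Adj a e ∨ G.Adj b e) ∧ e ≠ a ∧ e ≠ b ∧ e ≠ c ∧ e ≠ d := by
  classical
  have hac_nadj : ¬ G.Adj a c := fun h ↦
    hfree (pathGraph_four_isContained hab.symm h hcd hbc had hbd)
  have had_nadj : ¬ G.Adj a d := fun h ↦
    hfree (pathGraph_four_isContained hab.symm h hcd.symm hbd hac hbc)
  have hbc_nadj : ¬ G.Adj b c := fun h ↦ hfree (pathGraph_four_isContained hab h hcd hac hbd had)
  have hbd_nadj : ¬ G.Adj b d := fun h ↦
    hfree (pathGraph_four_isContained hab h hcd.symm had hbc hac)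
  obtain ⟨x, hx, e, he, hxe⟩ := hcut {a, b} (Finset.card_pair hab.ne)
  simp only [Finset.mem_insert, Finset.mem_singleton, not_or] at hx he
  rcases hx with rfl | rfl
  · exact ⟨e, .inl hxe, he.1, he.2, by rintro rfl; exact hac_nadj hxe,
      by rintro rfl; exact had_nadj hxe⟩
  · exact ⟨e, .inr hxe, he.1, he.2, by rintro rfl; exact hbc_nadj hxe,
      by rintro rfl; exact hbd_nadj hxe⟩

variable [Fintype V]

theorem pathGraph_four_isContained_of_triangle (hV : Fintype.card V = 5) {a b c : V}
    (hab : G.Adj a b) (hbc : G.Adj b c) (hca : G.Adj c a)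
    (hcut : ∀ s : Finset V, s.card = 2 → ∃ x ∈ s, ∃ y ∉ s, G.Adj x y) : pathGraph 4 ⊑ G := by
  classical
  have hcard : ({a, b, c} : Finset V)ᶜ.card = 2 := by
    rw [Finset.card_compl, hV, Finset.card_eq_three.mpr ⟨a, b, c, hab.ne, hca.ne', hbc.ne, rfl⟩]
  obtain ⟨x, hx, y, hy, hxy⟩ := hcut _ hcard
  simp only [Finset.mem_compl, Finset.mem_insert, Finset.mem_singleton, not_not] at hx hy
  simp only [not_or] at hx
  obtain ⟨hxa, hxb, hxc⟩ := hx
  rcases hy with rfl | rfl | rfl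
  · exact pathGraph_four_isContained hxy hab hbc hxb hca.ne' hxc
  · exact pathGraph_four_isContained hxy hbc hca hxc hab.ne' hxa
  · exact pathGraph_four_isContained hxy hca hab hxa hbc.ne' hxb

theorem pathGraph_four_isContained_of_disjoint_adj (hV : Fintype.card V ≤ 5) {a b c d : V}
    (hab : G.Adj a b) (hcd : G.Adj c d) (hac : a ≠ c) (had : a ≠ d) (hbc : b ≠ c) (hbd : b ≠ d)
    (hcut : ∀ s : Finset V, s.card = 2 → ∃ x ∈ s, ∃ y ∉ s, G.Adj x y) : pathGraph 4 ⊑ G := by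
  classical
  by_contra hfree
  obtain ⟨e, hab_e, hea, heb, hec, hed⟩ :=
    exists_adj_of_disjoint_adj hfree hab hcd hac had hbc hbd hcut
  obtain ⟨f, hcd_f, hfc, hfd, hfa, hfb⟩ :=
    exists_adj_of_disjoint_adj hfree hcd hab hac.symm hbc.symm had.symm hbd.symm hcut
  obtain rfl : e = f := by
    by_contra hef
    have hcard : ({a, b, c, d, e, f} : Finset V).card = 6 := by
      simp [hab.ne, hcd.ne, hac, had, hbc, hbd, hea.symm, heb.symm, hec.symm, hed.symm,
        hfa.symm, hfb.symm, hfc.symm, hfd.symm, hef]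
    exact absurd (Finset.card_le_univ {a, b, c, d, e, f}) (by omega)
  refine hfree ?_
  rcases hab_e with hae | hbe <;> rcases hcd_f with hce | hde
  · exact pathGraph_four_isContained hab.symm hae hce.symm heb.symm hac hbc
  · exact pathGraph_four_isContained hab.symm hae hde.symm heb.symm had hbd
  · exact pathGraph_four_isContained hab hbe hce.symm hea.symm hbc hac
  · exact pathGraph_four_isContained hab hbe hde.symm hea.symm hbd had

theorem pathGraph_four_isContained_of_not_isVertexCover (hV : Fintype.card V = 5)
    (hcover : ∀ x, ¬ G.IsVertexCover {x})
    (hcut : ∀ s : Finset V, s.card = 2 → ∃ x ∈ s, ∃ y ∉ s, G.Adj x y) : pathGraph 4 ⊑ G := by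
  have : Nonempty V := Fintype.card_pos_iff.mp (by omega)
  rcases exists_triangle_or_disjoint_adj hcover with
    ⟨a, b, c, hab, hbc, hca⟩ | ⟨a, b, c, d, hab, hcd, hac, had, hbc, hbd⟩
  · exact pathGraph_four_isContained_of_triangle hV hab hbc hca hcut
  · exact pathGraph_four_isContained_of_disjoint_adj hV.le hab hcd hac had hbc hbd hcut

end FourVertexPath

section FivePoints

variable {V : Type*} [Fintype V] {G : SimpleGraph V}

theorem completeGraph_isContained_of_isVertexCover_compl {n : ℕ} {s : Finset V}
    (hs : Gᶜ.IsVertexCover s) (hcard : Fintype.card V = s.card + n) :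
    (⊤ : SimpleGraph (Fin n)) ⊑ G := by
  classical
  have hclique : G.IsNClique n sᶜ := by
    refine ⟨?_, by rw [Finset.card_compl, hcard, Nat.add_sub_cancel_left]⟩
    rw [← isIndepSet_compl, Finset.coe_compl]
    exact isIndepSet_compl_iff_isVertexCover.mpr hs
  exact (not_cliqueFree_iff_top_isContained n).mp hclique.not_cliqueFree

theorem completeBipartiteGraph_isContained_of_not_adj_compl {α β : Type*} [Fintype α] [Fintype β]
    {s : Finset V} (hs : s.card = Fintype.card α)
    (hcard : Fintype.card V = Fintype.card α + Fintype.card β)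
    (hcut : ∀ x ∈ s, ∀ y ∉ s, ¬ Gᶜ.Adj x y) : completeBipartiteGraph α β ⊑ G := by
  classical
  refine completeBipartiteGraph_isContained_iff.mpr
    ⟨s, sᶜ, hs, by rw [Finset.card_compl, hs, hcard, Nat.add_sub_cancel_left], ?_⟩
  intro x hx y hy
  have hy' : y ∉ s := by simpa using hy
  have hxy : x ≠ y := ne_of_mem_of_not_mem hx hy'
  simpa [hxy] using hcut x hx y hy'

theorem isUnitDistance_of_card_eq_five (hV : Fintype.card V = 5)
    (hK4 : ¬ (⊤ : SimpleGraph (Fin 4)) ⊑ G)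
    (hK23 : ¬ completeBipartiteGraph (Fin 2) (Fin 3) ⊑ G) : IsUnitDistance G := by
  refine (isUnitDistance_fanGraph (by norm_num)).of_isContained <| isContained_fanGraph_four hV <|
    pathGraph_four_isContained_of_not_isVertexCover hV (fun x hx ↦ hK4 ?_) fun s hs ↦ ?_
  · exact completeGraph_isContained_of_isVertexCover_compl (s := {x}) (by simpa using hx)
      (by simp [hV])
  · by_contra! hcut
    exact hK23 <|
      completeBipartiteGraph_isContained_of_not_adj_compl (by simp [hs]) (by simp [hV]) hcut

theorem isUnitDistance_of_card_le_five (hV : Fintype.card V ≤ 5)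
    (hK4 : ¬ (⊤ : SimpleGraph (Fin 4)) ⊑ G)
    (hK23 : ¬ completeBipartiteGraph (Fin 2) (Fin 3) ⊑ G) : IsUnitDistance G := by
  have hcard : Fintype.card (V ⊕ Fin (5 - Fintype.card V)) = 5 := by
    rw [Fintype.card_sum, Fintype.card_fin]
    omega
  have hpadded : IsUnitDistance (G ⊕g (⊥ : SimpleGraph (Fin (5 - Fintype.card V)))) :=
    isUnitDistance_of_card_eq_five hcard
      (mt (isContained_of_isContained_sum_bot fun v ↦ by simp) hK4)
      (mt (isContained_of_isContained_sum_bot not_isIsolated_completeBipartiteGraph) hK23)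
  exact hpadded.of_isContained Embedding.sumInl.isContained

end FivePoints

end

theorem unit_distance_iff_K4_K23_free {V : Type*} [Fintype V] (G : SimpleGraph V)
    (hV : Fintype.card V ≤ 5) :
    IsUnitDistance G ↔
      ¬ ContainsSub (⊤ : SimpleGraph (Fin 4)) G ∧
      ¬ ContainsSub (completeBipartiteGraph (Fin 2) (Fin 3)) G := by
  simp only [containsSub_iff_isContained]
  constructor
  · intro hG
    exact ⟨mt hG.of_isContained not_isUnitDistance_completeGraph_four,
      mt hG.of_isContained not_isUnitDistance_completeBipartiteGraph_two_three⟩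
  · rintro ⟨hK4, hK23⟩
    exact isUnitDistance_of_card_le_five hV hK4 hK23
end

section
/- The graph F(8,13,1), defined as the simple graph on vertex set {1,...,8} with edge set {{1,2},{1,3},{1,5},{2,3},{2,4},{3,4},{3,5},{3,6},{5,6},{2,7},{4,7},{7,8},{6,8}}, is forbidden: there is no injective map φ : {1,...,8} → ℝ² with dist(φ(i), φ(j)) = 1 for every edge {i,j}. -/
/-!
The equilateral triangles `213`, `135`, `356` fan around `3` through a straight angle, so `3` is the
midpoint of `2` and `6`; the triangles `324`, `247` form a rhombus whose long diagonal `37` has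
length `√3`. Apollonius' theorem for the median `37` of the triangle `267` gives
`1 + |67|² = 2(3 + 1)`, so `|67| = √7 > 2`, whereas the path `7, 8, 6` forces `|67| ≤ 2`.
-/

open Module EuclideanGeometry

section Plane

variable {V P : Type*} [NormedAddCommGroup V] [InnerProductSpace ℝ V] [MetricSpace P]
  [NormedAddTorsor V P]

theorem dist_midpoint_eq_of_dist_eq {p q r s : P} (hq : dist s q = dist p q)
    (hr : dist s r = dist p r) : dist s (midpoint ℝ q r) = dist p (midpoint ℝ q r) := by
  have hp := dist_sq_add_dist_sq_eq_two_mul_dist_midpoint_sq_add_half_dist_sq p q r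
  have hs := dist_sq_add_dist_sq_eq_two_mul_dist_midpoint_sq_add_half_dist_sq s q r
  rw [hq, hr] at hs
  exact (sq_eq_sq₀ dist_nonneg dist_nonneg).mp (by linarith)

theorem midpoint_eq_midpoint_of_rhombus (hV : finrank ℝ V = 2) {p q r s : P} {d : ℝ} (hps : p ≠ s)
    (hqr : q ≠ r) (hpq : dist p q = d) (hpr : dist p r = d) (hsq : dist s q = d)
    (hsr : dist s r = d) : midpoint ℝ p s = midpoint ℝ q r := by
  have : FiniteDimensional ℝ V := .of_finrank_eq_succ hV
  set m := midpoint ℝ q r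
  let ρ := AffineIsometryEquiv.pointReflection ℝ m
  have hρq : dist (ρ p) q = d := by
    rw [← hpr, ← ρ.dist_map p r, AffineIsometryEquiv.pointReflection_midpoint_right]
  have hρr : dist (ρ p) r = d := by
    rw [← hpq, ← ρ.dist_map p q, AffineIsometryEquiv.pointReflection_midpoint_left]
  -- `p` and `s` are the only two points at distance `d` from both `q` and `r`.
  rcases eq_of_dist_eq_of_dist_eq_of_finrank_eq_two hV hqr hps hpq hsq hρq hpr hsr hρr
    with hp | hs
  · have hpm : p = m := (AffineIsometryEquiv.pointReflection_fixed_iff (𝕜 := ℝ)).mp hp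
    have hsm : dist s m = dist p m :=
      dist_midpoint_eq_of_dist_eq (hsq.trans hpq.symm) (hsr.trans hpr.symm)
    rw [← hpm, dist_self, dist_eq_zero] at hsm
    exact absurd hsm.symm hps
  · exact midpoint_eq_iff.mpr hs

theorem midpoint_eq_midpoint_of_equilateral (hV : finrank ℝ V = 2) {p q r s : P} {d : ℝ}
    (hps : p ≠ s) (hqr : dist q r = d) (hpq : dist p q = d) (hpr : dist p r = d)
    (hsq : dist s q = d) (hsr : dist s r = d) : midpoint ℝ p s = midpoint ℝ q r := by
  refine midpoint_eq_midpoint_of_rhombus hV hps ?_ hpq hpr hsq hsr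
  rintro rfl
  rw [dist_self] at hqr
  subst hqr
  exact hps ((dist_eq_zero.mp hpq).trans (dist_eq_zero.mp hsq).symm)

theorem dist_sq_eq_three_mul_sq_of_equilateral (hV : finrank ℝ V = 2) {p q r s : P} {d : ℝ}
    (hps : p ≠ s) (hqr : dist q r = d) (hpq : dist p q = d) (hpr : dist p r = d)
    (hsq : dist s q = d) (hsr : dist s r = d) : dist p s ^ 2 = 3 * d ^ 2 := by
  have apollonius :=
    dist_sq_add_dist_sq_eq_two_mul_dist_midpoint_sq_add_half_dist_sq (V := V) p q r
  rw [← midpoint_eq_midpoint_of_equilateral hV hps hqr hpq hpr hsq hsr, dist_left_midpoint,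
    Real.norm_two, hpq, hpr, hqr] at apollonius
  linarith

theorem midpoint_eq_of_equilateral_fan (hV : finrank ℝ V = 2) {o a b c e : P} {d : ℝ}
    (hac : a ≠ c) (hbe : b ≠ e) (hoa : dist o a = d) (hob : dist o b = d) (hoc : dist o c = d)
    (hoe : dist o e = d) (hab : dist a b = d) (hbc : dist b c = d) (hce : dist c e = d) :
    midpoint ℝ a e = o := by
  rw [dist_comm] at hoa hoe hce
  have hac_bo : midpoint ℝ a c = midpoint ℝ o b :=
    midpoint_eq_midpoint_of_equilateral hV hac hob hoa hab (by rwa [dist_comm]) (by rwa [dist_comm])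
  have hbe_co : midpoint ℝ b e = midpoint ℝ c o :=
    midpoint_eq_midpoint_of_equilateral hV hbe (by rwa [dist_comm]) hbc (by rwa [dist_comm]) hce hoe
  rw [midpoint_eq_midpoint_iff_vsub_eq_vsub] at hac_bo hbe_co
  rw [← midpoint_self ℝ o, midpoint_eq_midpoint_iff_vsub_eq_vsub]
  exact hac_bo.trans hbe_co

theorem F_8_13_1_forbidden_general (hV : finrank ℝ V = 2) :
    ¬ ∃ φ : ℕ → P,
      (φ 1 ≠ φ 6 ∧ φ 2 ≠ φ 5 ∧ φ 3 ≠ φ 7) ∧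
      dist (φ 1) (φ 2) = 1 ∧
      dist (φ 1) (φ 3) = 1 ∧
      dist (φ 1) (φ 5) = 1 ∧
      dist (φ 2) (φ 3) = 1 ∧
      dist (φ 2) (φ 4) = 1 ∧
      dist (φ 3) (φ 4) = 1 ∧
      dist (φ 3) (φ 5) = 1 ∧
      dist (φ 3) (φ 6) = 1 ∧
      dist (φ 5) (φ 6) = 1 ∧
      dist (φ 2) (φ 7) = 1 ∧
      dist (φ 4) (φ 7) = 1 ∧
      dist (φ 7) (φ 8) = 1 ∧
      dist (φ 6) (φ 8) = 1 := by
  rintro ⟨φ, ⟨h16, h25, h37⟩, d12, d13, d15, d23, d24, d34, d35, d36, d56, d27, d47, d78, d68⟩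
  rw [dist_comm] at d12 d13 d27 d47 d68
  have midpoint_26 : midpoint ℝ (φ 2) (φ 6) = φ 3 :=
    midpoint_eq_of_equilateral_fan hV h25 h16 (by rwa [dist_comm]) d13 d35 d36 d12 d15 d56
  have dist_26 : dist (φ 2) (φ 6) / 2 = 1 := by
    rw [← d23, ← midpoint_26, dist_left_midpoint, Real.norm_two, div_eq_inv_mul]
  have dist_37 : dist (φ 3) (φ 7) ^ 2 = 3 * 1 ^ 2 :=
    dist_sq_eq_three_mul_sq_of_equilateral hV h37 d24 (by rwa [dist_comm]) d34 d27 d47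
  have apollonius :=
    dist_sq_add_dist_sq_eq_two_mul_dist_midpoint_sq_add_half_dist_sq (V := V) (φ 7) (φ 2) (φ 6)
  rw [midpoint_26, dist_26, d27, dist_comm (φ 7) (φ 3), dist_37] at apollonius
  have dist_76_le : dist (φ 7) (φ 6) ≤ 2 := by
    linarith [dist_triangle (φ 7) (φ 8) (φ 6)]
  have : dist (φ 7) (φ 6) ^ 2 ≤ 2 ^ 2 := by gcongr
  linarith

end Plane

theorem F_8_13_1_forbidden :
    ¬ ∃ φ : ℕ → EuclideanSpace ℝ (Fin 2),
      Set.InjOn φ (Set.Icc 1 8) ∧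
      dist (φ 1) (φ 2) = 1 ∧
      dist (φ 1) (φ 3) = 1 ∧
      dist (φ 1) (φ 5) = 1 ∧
      dist (φ 2) (φ 3) = 1 ∧
      dist (φ 2) (φ 4) = 1 ∧
      dist (φ 3) (φ 4) = 1 ∧
      dist (φ 3) (φ 5) = 1 ∧
      dist (φ 3) (φ 6) = 1 ∧
      dist (φ 5) (φ 6) = 1 ∧
      dist (φ 2) (φ 7) = 1 ∧
      dist (φ 4) (φ 7) = 1 ∧
      dist (φ 7) (φ 8) = 1 ∧
      dist (φ 6) (φ 8) = 1 := by
  rintro ⟨φ, hφ, h⟩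
  exact F_8_13_1_forbidden_general finrank_euclideanSpace_fin
    ⟨φ, ⟨hφ.ne (by simp) (by simp) (by simp), hφ.ne (by simp) (by simp) (by simp),
      hφ.ne (by simp) (by simp) (by simp)⟩, h⟩
end

section
/- The graph F(9,14,18), defined as the simple graph on vertex set {1,...,9} with edge set {{1,2},{2,4},{3,4},{1,3},{2,3},{1,5},{5,6},{2,6},{4,7},{6,7},{7,9},{1,9},{5,8},{4,8}}, is forbidden: there is no injective map φ : {1,...,9} → ℝ² with dist(φ(i), φ(j)) = 1 for every edge {i,j}. -/
/-!
The rhombi `1243`, `1562` and `2674` are parallelograms, hence so is `1574`. If the edges have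
length `r`, its sides are `d(1,5) = r` and `d(1,4) = √3 r`, the latter because the triangles `123`
and `234` are equilateral. By the parallelogram law its squared diagonals add up to `8 r²`.
The points `9` and `8` are at distance `r` from the ends of the diagonals `17` and `54`
respectively, so by Apollonius' theorem their squared distances from the common midpoint add up
to `2 r² - 8 r² / 4 = 0`, that is, they coincide.
-/

open Module

lemma dist_left_pointReflection_midpoint (𝕜 : Type*) {V P : Type*} [NormedField 𝕜]
    [Invertible (2 : 𝕜)] [SeminormedAddCommGroup V] [NormedSpace 𝕜 V] [PseudoMetricSpace P]
    [NormedAddTorsor V P] (a b d : P) :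
    dist b (AffineEquiv.pointReflection 𝕜 (midpoint 𝕜 b d) a) = dist a d := by
  have h := (AffineIsometryEquiv.pointReflection 𝕜 (midpoint 𝕜 b d)).dist_map d a
  rwa [← AffineIsometryEquiv.coe_toAffineEquiv, AffineIsometryEquiv.pointReflection_toAffineEquiv,
    AffineEquiv.pointReflection_midpoint_right, dist_comm d a] at h

section Parallelogram

variable {V P : Type*} [NormedAddCommGroup V] [InnerProductSpace ℝ V] [MetricSpace P]
  [NormedAddTorsor V P]

lemma dist_midpoint_sq_of_dist_eq {a b p : P} {r : ℝ} (ha : dist a p = r) (hb : dist b p = r) :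
    dist p (midpoint ℝ a b) ^ 2 = r ^ 2 - (dist a b / 2) ^ 2 := by
  have apollonius :=
    EuclideanGeometry.dist_sq_add_dist_sq_eq_two_mul_dist_midpoint_sq_add_half_dist_sq p a b
  rw [dist_comm p a, ha, dist_comm p b, hb] at apollonius
  linarith

lemma dist_diag_sq_add_dist_diag_sq_of_midpoint_eq {a b c d : P}
    (h : midpoint ℝ a c = midpoint ℝ b d) :
    dist a c ^ 2 + dist b d ^ 2 = 2 * (dist a b ^ 2 + dist a d ^ 2) := by
  have apollonius :=
    EuclideanGeometry.dist_sq_add_dist_sq_eq_two_mul_dist_midpoint_sq_add_half_dist_sq a b d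
  rw [← h, dist_left_midpoint, Real.norm_ofNat] at apollonius
  linarith

lemma eq_of_dist_eq_of_midpoint_eq {a b c d p q : P} {r s : ℝ}
    (h : midpoint ℝ a c = midpoint ℝ b d)
    (hap : dist a p = r) (hcp : dist c p = r) (hbq : dist b q = s) (hdq : dist d q = s)
    (hrs : 2 * (r ^ 2 + s ^ 2) ≤ dist a b ^ 2 + dist a d ^ 2) : p = q := by
  have hp := dist_midpoint_sq_of_dist_eq hap hcp
  have hq := dist_midpoint_sq_of_dist_eq hbq hdq
  have hdiag := dist_diag_sq_add_dist_diag_sq_of_midpoint_eq h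
  rw [← h] at hq
  have hsum : dist p (midpoint ℝ a c) ^ 2 + dist q (midpoint ℝ a c) ^ 2 ≤ 0 := by linarith
  obtain ⟨hp₀, hq₀⟩ := (add_eq_zero_iff_of_nonneg (sq_nonneg _) (sq_nonneg _)).1
    (hsum.antisymm (by positivity))
  rw [sq_eq_zero_iff, dist_eq_zero] at hp₀ hq₀
  exact hp₀.trans hq₀.symm

/- The reflection of `a` in the midpoint of `bd` lies on both circles of radius `r` around `b` and
`d`, which meet only in `a` and `c`. -/
lemma midpoint_eq_midpoint_of_rhombus_s13 (hV : finrank ℝ V = 2) {a b c d : P} {r : ℝ}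
    (hab : dist a b = r) (hbc : dist b c = r) (had : dist a d = r) (hdc : dist d c = r)
    (hac : a ≠ c) (hbd : b ≠ d) : midpoint ℝ a c = midpoint ℝ b d := by
  have : FiniteDimensional ℝ V := .of_finrank_pos (by lia)
  set a' := AffineEquiv.pointReflection ℝ (midpoint ℝ b d) a with ha'
  have ha'b : dist a' b = r := by
    rw [dist_comm, dist_left_pointReflection_midpoint, had]
  have ha'd : dist a' d = r := by
    rw [dist_comm, ha', midpoint_comm, dist_left_pointReflection_midpoint, hab]
  rcases EuclideanGeometry.eq_of_dist_eq_of_dist_eq_of_finrank_eq_two hV hbd hac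
    hab (dist_comm b c ▸ hbc) ha'b had (dist_comm d c ▸ hdc) ha'd with haa' | hca'
  · have ham : a = midpoint ℝ b d := (AffineEquiv.pointReflection_fixed_iff_of_module ℝ).1 haa'
    have hdist : dist c (midpoint ℝ b d) ^ 2 = dist a (midpoint ℝ b d) ^ 2 := by
      rw [dist_midpoint_sq_of_dist_eq hbc hdc,
        dist_midpoint_sq_of_dist_eq (dist_comm a b ▸ hab) (dist_comm a d ▸ had)]
    have hca : c = a := by simpa [← ham] using hdist
    exact absurd hca.symm hac
  · exact midpoint_eq_iff.2 hca'

lemma dist_sq_eq_three_mul_of_equilateral (hV : finrank ℝ V = 2) {a b c d : P} {r : ℝ}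
    (hab : dist a b = r) (hbc : dist b c = r) (had : dist a d = r) (hdc : dist d c = r)
    (hbd : dist b d = r) (hac : a ≠ c) : dist a c ^ 2 = 3 * r ^ 2 := by
  have hne : b ≠ d := by
    rintro rfl
    have hr : r = 0 := by rw [← hbd, dist_self]
    exact hac ((dist_eq_zero.1 (hab.trans hr)).trans (dist_eq_zero.1 (hbc.trans hr)))
  have hdiag := dist_diag_sq_add_dist_diag_sq_of_midpoint_eq
    (midpoint_eq_midpoint_of_rhombus_s13 hV hab hbc had hdc hac hne)
  rw [hab, had, hbd] at hdiag
  linarith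

theorem F_9_14_18_forbidden_general (hV : finrank ℝ V = 2) {r : ℝ}
    {p₁ p₂ p₃ p₄ p₅ p₆ p₇ p₈ p₉ : P}
    (h₁₂ : dist p₁ p₂ = r) (h₂₄ : dist p₂ p₄ = r) (h₃₄ : dist p₃ p₄ = r)
    (h₁₃ : dist p₁ p₃ = r) (h₂₃ : dist p₂ p₃ = r) (h₁₅ : dist p₁ p₅ = r)
    (h₅₆ : dist p₅ p₆ = r) (h₂₆ : dist p₂ p₆ = r) (h₄₇ : dist p₄ p₇ = r)
    (h₆₇ : dist p₆ p₇ = r) (h₇₉ : dist p₇ p₉ = r) (h₁₉ : dist p₁ p₉ = r)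
    (h₅₈ : dist p₅ p₈ = r) (h₄₈ : dist p₄ p₈ = r)
    (n₁₄ : p₁ ≠ p₄) (n₁₆ : p₁ ≠ p₆) (n₂₅ : p₂ ≠ p₅) (n₂₇ : p₂ ≠ p₇) (n₄₆ : p₄ ≠ p₆) :
    p₈ = p₉ := by
  have h₁₅₆₂ : midpoint ℝ p₁ p₆ = midpoint ℝ p₅ p₂ :=
    midpoint_eq_midpoint_of_rhombus_s13 hV h₁₅ h₅₆ h₁₂ h₂₆ n₁₆ n₂₅.symm
  have h₂₆₇₄ : midpoint ℝ p₂ p₇ = midpoint ℝ p₆ p₄ :=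
    midpoint_eq_midpoint_of_rhombus_s13 hV h₂₆ h₆₇ h₂₄ h₄₇ n₂₇ n₄₆.symm
  have h₁₅₇₄ : midpoint ℝ p₁ p₇ = midpoint ℝ p₅ p₄ :=
    (midpoint_eq_midpoint_iff_vsub_eq_vsub ℝ).2 <|
      ((midpoint_eq_midpoint_iff_vsub_eq_vsub ℝ).1 h₁₅₆₂).trans
        ((midpoint_eq_midpoint_iff_vsub_eq_vsub ℝ).1 h₂₆₇₄)
  have h₁₄ : dist p₁ p₄ ^ 2 = 3 * r ^ 2 :=
    dist_sq_eq_three_mul_of_equilateral hV h₁₂ h₂₄ h₁₃ h₃₄ h₂₃ n₁₄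
  refine (eq_of_dist_eq_of_midpoint_eq h₁₅₇₄ h₁₉ h₇₉ h₅₈ h₄₈ ?_).symm
  rw [h₁₅, h₁₄]
  linarith

end Parallelogram

theorem F_9_14_18_forbidden :
    ¬ ∃ φ : ℕ → EuclideanSpace ℝ (Fin 2),
      Set.InjOn φ (Set.Icc 1 9) ∧
      dist (φ 1) (φ 2) = 1 ∧
      dist (φ 2) (φ 4) = 1 ∧
      dist (φ 3) (φ 4) = 1 ∧
      dist (φ 1) (φ 3) = 1 ∧
      dist (φ 2) (φ 3) = 1 ∧
      dist (φ 1) (φ 5) = 1 ∧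
      dist (φ 5) (φ 6) = 1 ∧
      dist (φ 2) (φ 6) = 1 ∧
      dist (φ 4) (φ 7) = 1 ∧
      dist (φ 6) (φ 7) = 1 ∧
      dist (φ 7) (φ 9) = 1 ∧
      dist (φ 1) (φ 9) = 1 ∧
      dist (φ 5) (φ 8) = 1 ∧
      dist (φ 4) (φ 8) = 1 := by
  rintro ⟨φ, hφ, h₁₂, h₂₄, h₃₄, h₁₃, h₂₃, h₁₅, h₅₆, h₂₆, h₄₇, h₆₇, h₇₉, h₁₉, h₅₈, h₄₈⟩
  have h₈₉ : φ 8 = φ 9 := F_9_14_18_forbidden_general finrank_euclideanSpace_fin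
    h₁₂ h₂₄ h₃₄ h₁₃ h₂₃ h₁₅ h₅₆ h₂₆ h₄₇ h₆₇ h₇₉ h₁₉ h₅₈ h₄₈ (by simp [hφ.eq_iff])
    (by simp [hφ.eq_iff]) (by simp [hφ.eq_iff]) (by simp [hφ.eq_iff]) (by simp [hφ.eq_iff])
  simp [hφ.eq_iff] at h₈₉
end

section
/- The graph H₁, defined as the simple graph on vertex set {1,...,9} with edge set {{1,2},{2,3},{3,5},{4,5},{1,4},{2,4},{2,5},{5,6},{6,8},{7,8},{7,9},{6,9},{8,9},{1,8},{3,7}}, is unit-distance: there exists an injective map φ : {1,...,9} → ℝ² with dist(φ(i), φ(j)) = 1 for every edge {i,j}. -/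
/-!
Vertices 1 to 5 span three equilateral triangles, forming half of a regular hexagon, and vertices
6 to 9 span two, forming a rhombus. These two rigid pieces are joined only by the edges 18, 37, 56.
Without the edge 56, the chain 1-8-7-3 is a four-bar linkage on the fixed base 13 of length 2, with
one degree of freedom. As it moves from the position with 87 parallel to 13 to the one with
1, 8, 7 collinear, the distance between 5 and 6 goes from √3 to √((11 - 3√5) / 8) < 1, so it
equals 1 at some moment in between.
-/

section

open Complex Set

/-- The primitive sixth root of unity in the upper half plane. Multiplication by it is the rotation
by 60°, so that `0`, `z` and `sixthRoot * z` span an equilateral triangle. -/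
noncomputable def sixthRoot : ℂ := ⟨1 / 2, √3 / 2⟩

lemma sixthRoot_mul_re (z : ℂ) : (sixthRoot * z).re = z.re / 2 - √3 / 2 * z.im := by
  simp only [sixthRoot, mul_re]
  ring

lemma sixthRoot_mul_im (z : ℂ) : (sixthRoot * z).im = z.im / 2 + √3 / 2 * z.re := by
  simp only [sixthRoot, mul_im]
  ring

lemma norm_sixthRoot : ‖sixthRoot‖ = 1 := by
  have h3 : √3 * √3 = 3 := Real.mul_self_sqrt (by norm_num)
  rw [← sq_eq_sq₀ (norm_nonneg _) zero_le_one, Complex.sq_norm, normSq_apply]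
  simp only [sixthRoot]
  linear_combination h3 / 4

lemma sixthRoot_mul_self : sixthRoot * sixthRoot = sixthRoot - 1 := by
  have h3 : √3 * √3 = 3 := Real.mul_self_sqrt (by norm_num)
  apply Complex.ext
  · simp only [sixthRoot_mul_re, sub_re, one_re]
    simp only [sixthRoot]
    linear_combination -h3 / 4
  · simp only [sixthRoot_mul_im, sub_im, one_im]
    simp only [sixthRoot]
    ring

lemma dist_sixthRoot_mul (z : ℂ) : dist z (sixthRoot * z) = ‖z‖ := by
  have h : z - sixthRoot * z = -(sixthRoot * sixthRoot * z) := by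
    rw [sixthRoot_mul_self]
    ring
  rw [dist_eq, h, norm_neg, norm_mul, norm_mul, norm_sixthRoot, one_mul, one_mul]

/-- The apex of the isosceles triangle with base `ab` and legs of length `r`, to the right of the
ray from `a` to `b`. It is meaningful only for `a ≠ b` and `dist a b ≤ 2 * r`. -/
noncomputable def isoscelesApex (r : ℝ) (a b : ℂ) : ℂ :=
  (a + b) / 2 - √(r ^ 2 / dist a b ^ 2 - 1 / 4) * (I * (b - a))

section IsoscelesApex

variable {r : ℝ} {a b : ℂ}

lemma dist_mul_norm_eq_leg (hab : a ≠ b) (hr : dist a b ≤ 2 * r) {t : ℝ} (ht : t ^ 2 = 1 / 4) :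
    dist a b * ‖(t : ℂ) + (-√(r ^ 2 / dist a b ^ 2 - 1 / 4) : ℝ) * I‖ = r := by
  have hd : 0 < dist a b := dist_pos.2 hab
  have hslope : 0 ≤ r ^ 2 / dist a b ^ 2 - 1 / 4 := by
    rw [sub_nonneg, le_div_iff₀ (by positivity)]
    nlinarith
  rw [norm_add_mul_I, neg_sq, Real.sq_sqrt hslope, ht, add_sub_cancel, ← div_pow,
    Real.sqrt_sq (div_nonneg (by linarith) hd.le), mul_div_cancel₀ _ hd.ne']

lemma dist_isoscelesApex_left (hab : a ≠ b) (hr : dist a b ≤ 2 * r) :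
    dist a (isoscelesApex r a b) = r := by
  have h : a - isoscelesApex r a b =
      (a - b) * (((1 / 2 : ℝ) : ℂ) + (-√(r ^ 2 / dist a b ^ 2 - 1 / 4) : ℝ) * I) := by
    rw [isoscelesApex]
    push_cast
    ring
  rw [dist_eq, h, norm_mul, ← dist_eq, dist_mul_norm_eq_leg hab hr (by norm_num)]

lemma dist_isoscelesApex_right (hab : a ≠ b) (hr : dist a b ≤ 2 * r) :
    dist b (isoscelesApex r a b) = r := by
  have h : b - isoscelesApex r a b =
      (a - b) * (((-1 / 2 : ℝ) : ℂ) + (-√(r ^ 2 / dist a b ^ 2 - 1 / 4) : ℝ) * I) := by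
    rw [isoscelesApex]
    push_cast
    ring
  rw [dist_eq, h, norm_mul, ← dist_eq, dist_mul_norm_eq_leg hab hr (by norm_num)]

lemma continuousOn_isoscelesApex {X : Type*} [TopologicalSpace X] {f g : X → ℂ} {s : Set X}
    (hf : ContinuousOn f s) (hg : ContinuousOn g s) (hfg : ∀ x ∈ s, f x ≠ g x) :
    ContinuousOn (fun x ↦ isoscelesApex r (f x) (g x)) s := by
  have hdist : ∀ x ∈ s, dist (f x) (g x) ^ 2 ≠ 0 := fun x hx ↦
    pow_ne_zero 2 (dist_ne_zero.2 (hfg x hx))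
  unfold isoscelesApex
  fun_prop (disch := assumption)

end IsoscelesApex

/-- The unit vector from vertex 8 to vertex 7, in the lower half plane. Its real part `x` is the
parameter of the linkage. -/
noncomputable def coupler (x : ℝ) : ℂ := ⟨x, -√(1 - x ^ 2)⟩

/-- Vertex 8, at unit distance from vertex 1 at `-1` and such that vertex 7, which is at
`pivot x + coupler x`, has unit distance from vertex 3 at `1`. -/
noncomputable def pivot (x : ℝ) : ℂ := isoscelesApex 1 (-1) (1 - coupler x)

/-- The ratio of the height to the base in the isosceles triangle whose apex is `pivot x`. -/
noncomputable def pivotSlope (x : ℝ) : ℝ := √(1 / (5 - 4 * x) - 1 / 4)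

/-- The vertices of the graph in the position `x` of the linkage; vertices outside `{1, …, 9}` are
sent to `0`. -/
noncomputable def placement (x : ℝ) : ℕ → ℂ
  | 1 => -1
  | 2 => 0
  | 3 => 1
  | 4 => sixthRoot * sixthRoot
  | 5 => sixthRoot
  | 6 => pivot x + sixthRoot * (sixthRoot * coupler x)
  | 7 => pivot x + coupler x
  | 8 => pivot x
  | 9 => pivot x + sixthRoot * coupler x
  | _ => 0

section Linkage

variable {x : ℝ}

lemma sq_le_one_of_mem_Icc (hx : x ∈ Icc (7 / 8) 1) : x ^ 2 ≤ 1 :=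
  pow_le_one₀ (by linarith [hx.1]) hx.2

lemma sqrt_one_sub_sq_pos (hx : x ∈ Ico (7 / 8) 1) : 0 < √(1 - x ^ 2) :=
  Real.sqrt_pos.2 (by nlinarith [hx.1, hx.2])

lemma norm_coupler (hx : x ^ 2 ≤ 1) : ‖coupler x‖ = 1 := by
  rw [← sq_eq_sq₀ (norm_nonneg _) zero_le_one, Complex.sq_norm, normSq_apply, coupler]
  linear_combination Real.sq_sqrt (sub_nonneg.2 hx)

lemma dist_neg_one_one_sub_coupler_sq (hx : x ^ 2 ≤ 1) :
    dist (-1) (1 - coupler x) ^ 2 = 5 - 4 * x := by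
  rw [dist_eq, Complex.sq_norm, normSq_apply]
  simp only [coupler, sub_re, sub_im, neg_re, neg_im, one_re, one_im]
  linear_combination Real.sq_sqrt (sub_nonneg.2 hx)

lemma neg_one_ne_one_sub_coupler (hx : x ∈ Icc (7 / 8) 1) : -1 ≠ 1 - coupler x := by
  have hsq := dist_neg_one_one_sub_coupler_sq (sq_le_one_of_mem_Icc hx)
  exact dist_ne_zero.1 (pow_ne_zero_iff two_ne_zero |>.1 (by linarith [hx.2]))

lemma dist_neg_one_one_sub_coupler_le (hx : x ∈ Icc (7 / 8) 1) :
    dist (-1) (1 - coupler x) ≤ 2 * 1 := by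
  have hsq := dist_neg_one_one_sub_coupler_sq (sq_le_one_of_mem_Icc hx)
  exact le_of_sq_le_sq (by linarith [hx.1]) (by norm_num)

lemma pivot_eq (hx : x ^ 2 ≤ 1) :
    pivot x = -coupler x / 2 - pivotSlope x * (I * (2 - coupler x)) := by
  rw [pivot, isoscelesApex, dist_neg_one_one_sub_coupler_sq hx, one_pow, pivotSlope]
  ring

lemma pivot_re (hx : x ^ 2 ≤ 1) : (pivot x).re = -x / 2 + pivotSlope x * √(1 - x ^ 2) := by
  rw [pivot_eq hx]
  simp [coupler]

lemma pivot_im (hx : x ^ 2 ≤ 1) : (pivot x).im = √(1 - x ^ 2) / 2 - pivotSlope x * (2 - x) := by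
  rw [pivot_eq hx]
  simp [coupler]

lemma placement_six_re (hx : x ^ 2 ≤ 1) :
    (placement x 6).re = (pivotSlope x + √3 / 2) * √(1 - x ^ 2) - x := by
  rw [placement, ← mul_assoc, sixthRoot_mul_self, sub_one_mul, add_re, pivot_re hx, sub_re,
    sixthRoot_mul_re, coupler]
  ring

lemma placement_six_im (hx : x ^ 2 ≤ 1) :
    (placement x 6).im = √(1 - x ^ 2) + √3 / 2 * x - pivotSlope x * (2 - x) := by
  rw [placement, ← mul_assoc, sixthRoot_mul_self, sub_one_mul, add_im, pivot_im hx, sub_im,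
    sixthRoot_mul_im, coupler]
  ring

lemma placement_nine_re (hx : x ^ 2 ≤ 1) :
    (placement x 9).re = (pivotSlope x + √3 / 2) * √(1 - x ^ 2) := by
  rw [placement, add_re, pivot_re hx, sixthRoot_mul_re, coupler]
  ring

lemma placement_nine_im (hx : x ^ 2 ≤ 1) :
    (placement x 9).im = √3 / 2 * x - pivotSlope x * (2 - x) := by
  rw [placement, add_im, pivot_im hx, sixthRoot_mul_im, coupler]
  ring

lemma sqrt_one_sub_sq_lt_half (hx : 7 / 8 ≤ x) : √(1 - x ^ 2) < 1 / 2 :=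
  (Real.sqrt_lt' (by norm_num)).2 (by nlinarith)

lemma half_lt_pivotSlope (hx : x ∈ Icc (7 / 8) 1) : 1 / 2 < pivotSlope x := by
  obtain ⟨hx₁, hx₂⟩ := hx
  have h : 1 / 2 < 1 / (5 - 4 * x) := one_div_lt_one_div_of_lt (by linarith) (by linarith)
  exact Real.lt_sqrt_of_sq_lt (by linarith)

lemma pivotSlope_le (hx : x ≤ 1) : pivotSlope x ≤ √3 / 2 := by
  have h : 1 / (5 - 4 * x) ≤ 1 / 1 := one_div_le_one_div_of_le one_pos (by linarith)
  refine Real.sqrt_le_iff.2 ⟨by positivity, ?_⟩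
  rw [div_pow, Real.sq_sqrt (by norm_num)]
  linarith

lemma sqrt_three_mul_one_sub_lt (hx : x ∈ Ioo (1 / 2) 1) : √3 * (1 - x) < √(1 - x ^ 2) := by
  obtain ⟨hx₁, hx₂⟩ := hx
  refine Real.lt_sqrt_of_sq_lt ?_
  rw [mul_pow, Real.sq_sqrt (by norm_num)]
  nlinarith

lemma sqrt_three_lt_two : √3 < 2 := (Real.sqrt_lt' two_pos).2 (by norm_num)

lemma placement_eight_im_neg (hx : x ∈ Icc (7 / 8) 1) : (placement x 8).im < 0 := by
  have hslope := half_lt_pivotSlope hx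
  have hy := sqrt_one_sub_sq_lt_half hx.1
  rw [placement, pivot_im (sq_le_one_of_mem_Icc hx)]
  nlinarith [hx.2]

lemma placement_seven_im_lt_placement_eight_im (hx : x ∈ Ico (7 / 8) 1) :
    (placement x 7).im < (placement x 8).im := by
  have hy := sqrt_one_sub_sq_pos hx
  simp only [placement, add_im, coupler]
  linarith

lemma placement_nine_re_mem (hx : x ∈ Ico (7 / 8) 1) : (placement x 9).re ∈ Ioo 0 1 := by
  have hx' := Ico_subset_Icc_self hx
  have hslope := half_lt_pivotSlope hx'
  have hslope' := pivotSlope_le hx.2.le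
  have hsum : pivotSlope x + √3 / 2 < 2 := by linarith [sqrt_three_lt_two]
  have hy := sqrt_one_sub_sq_pos hx
  have hy' := sqrt_one_sub_sq_lt_half hx.1
  rw [placement_nine_re (sq_le_one_of_mem_Icc hx')]
  refine ⟨by positivity, ?_⟩
  calc (pivotSlope x + √3 / 2) * √(1 - x ^ 2) < 2 * (1 / 2) := by gcongr
    _ = 1 := by norm_num

lemma placement_eight_im_lt_placement_nine_im (hx : x ∈ Icc (7 / 8) 1) :
    (placement x 8).im < (placement x 9).im := by
  have hy := sqrt_one_sub_sq_lt_half hx.1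
  have h3 : 1 < √3 := Real.lt_sqrt_of_sq_lt (by norm_num)
  have hx' : x ^ 2 ≤ 1 := sq_le_one_of_mem_Icc hx
  rw [placement, pivot_im hx', placement_nine_im hx']
  nlinarith [hx.1]

lemma placement_nine_im_lt_placement_six_im (hx : x ∈ Ico (7 / 8) 1) :
    (placement x 9).im < (placement x 6).im := by
  have hy := sqrt_one_sub_sq_pos hx
  have hx' : x ^ 2 ≤ 1 := sq_le_one_of_mem_Icc (Ico_subset_Icc_self hx)
  rw [placement_nine_im hx', placement_six_im hx']
  linarith

lemma placement_six_im_mem (hx : x ∈ Ico (7 / 8) 1) :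
    (placement x 6).im ∈ Ioo 0 (√3 / 2) := by
  have hslope := half_lt_pivotSlope (Ico_subset_Icc_self hx)
  have hy := sqrt_one_sub_sq_lt_half hx.1
  have hy' := sqrt_three_mul_one_sub_lt ⟨by linarith [hx.1], hx.2⟩
  have hdrop : pivotSlope x ≤ pivotSlope x * (2 - x) :=
    le_mul_of_one_le_right (by linarith) (by linarith [hx.2])
  have hdrop' : pivotSlope x * (2 - x) ≤ √3 / 2 * (2 - x) :=
    mul_le_mul_of_nonneg_right (pivotSlope_le hx.2.le) (by linarith [hx.2])
  have hrise : √3 / 2 * x ≤ √3 / 2 := mul_le_of_le_one_right (by positivity) hx.2.le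
  rw [placement_six_im (sq_le_one_of_mem_Icc (Ico_subset_Icc_self hx))]
  constructor <;> linarith

lemma injOn_placement (hx : x ∈ Ico (7 / 8) 1) : InjOn (placement x) (Icc 1 9) := by
  have hx' := Ico_subset_Icc_self hx
  have h₁ : placement x 1 = ⟨-1, 0⟩ := by simp [placement, Complex.ext_iff]
  have h₂ : placement x 2 = ⟨0, 0⟩ := rfl
  have h₃ : placement x 3 = ⟨1, 0⟩ := rfl
  have h₄ : placement x 4 = ⟨1 / 2 - 1, √3 / 2⟩ := by
    rw [placement, sixthRoot_mul_self]
    simp [sixthRoot, Complex.ext_iff]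
  have h₅ : placement x 5 = ⟨1 / 2, √3 / 2⟩ := rfl
  obtain ⟨h₆, h₆'⟩ := placement_six_im_mem hx
  have h₇ := placement_seven_im_lt_placement_eight_im hx
  have h₈ := placement_eight_im_neg hx'
  have h₈₉ := placement_eight_im_lt_placement_nine_im hx'
  obtain ⟨h₉, h₉'⟩ := placement_nine_re_mem hx
  have h₉₆ := placement_nine_im_lt_placement_six_im hx
  rintro i ⟨hi₁, hi₂⟩ j ⟨hj₁, hj₂⟩ hij
  have hre := congrArg re hij
  have him := congrArg im hij
  interval_cases i <;> interval_cases j <;> first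
    | rfl
    | simp only [h₁, h₂, h₃, h₄, h₅] at hre him
      linarith
    | linarith

lemma dist_placement_five_six_sq (hx : x ^ 2 ≤ 1) :
    dist (placement x 5) (placement x 6) ^ 2 =
      ((pivotSlope x + √3 / 2) * √(1 - x ^ 2) - x - 1 / 2) ^ 2 +
        (√(1 - x ^ 2) + √3 / 2 * x - pivotSlope x * (2 - x) - √3 / 2) ^ 2 := by
  rw [dist_comm, dist_eq, Complex.sq_norm, normSq_apply, sub_re, sub_im, placement_six_re hx,
    placement_six_im hx]
  simp only [placement, sixthRoot]
  ring

lemma one_lt_dist_placement_five_six_one : 1 < dist (placement 1 5) (placement 1 6) := by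
  have h3 : √3 ^ 2 = (3 : ℝ) := Real.sq_sqrt (by norm_num)
  have hy : √(1 - 1 ^ 2) = 0 := by norm_num
  have hslope : pivotSlope 1 = √3 / 2 := by
    rw [pivotSlope, Real.sqrt_eq_iff_eq_sq (by norm_num) (by positivity)]
    linear_combination -h3 / 4
  have h : dist (placement 1 5) (placement 1 6) ^ 2 = 3 := by
    rw [dist_placement_five_six_sq (by norm_num), hy, hslope]
    linear_combination h3 / 4
  rw [← one_lt_sq_iff₀ dist_nonneg, h]
  norm_num

/-- At `x = 7 / 8` the vertices 1, 8, 7 are collinear. -/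
lemma dist_placement_five_six_seven_eighths_le_one :
    dist (placement (7 / 8) 5) (placement (7 / 8) 6) ≤ 1 := by
  have h3 : √3 ^ 2 = (3 : ℝ) := Real.sq_sqrt (by norm_num)
  have h5 : √5 ^ 2 = (5 : ℝ) := Real.sq_sqrt (by norm_num)
  have h5' : 1 ≤ √5 := Real.one_le_sqrt.2 (by norm_num)
  have hy : √(1 - (7 / 8) ^ 2) = √3 * √5 / 8 := by
    rw [Real.sqrt_eq_iff_eq_sq (by norm_num) (by positivity)]
    linear_combination -√5 ^ 2 / 64 * h3 - 3 / 64 * h5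
  have hslope : pivotSlope (7 / 8) = √3 * √5 / 6 := by
    rw [pivotSlope, Real.sqrt_eq_iff_eq_sq (by norm_num) (by positivity)]
    linear_combination -√5 ^ 2 / 36 * h3 - h5 / 12
  have h : dist (placement (7 / 8) 5) (placement (7 / 8) 6) ^ 2 = (11 - 3 * √5) / 8 := by
    have hre : (√3 * √5 / 6 + √3 / 2) * (√3 * √5 / 8) - 7 / 8 - 1 / 2 = (3 * √5 - 17) / 16 := by
      linear_combination (√5 ^ 2 / 48 + √5 / 16) * h3 + h5 / 16
    rw [dist_placement_five_six_sq (by norm_num), hy, hslope, hre]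
    linear_combination (1 + √5) ^ 2 / 256 * h3 + 3 / 64 * h5
  rw [← sq_le_one_iff₀ dist_nonneg, h]
  linarith

lemma continuous_coupler : Continuous coupler := by
  have h : coupler = fun x : ℝ ↦ (x : ℂ) + (-√(1 - x ^ 2) : ℝ) * I :=
    funext fun x ↦ mk_eq_add_mul_I x _
  rw [h]
  fun_prop

lemma continuousOn_pivot : ContinuousOn pivot (Icc (7 / 8) 1) :=
  continuousOn_isoscelesApex continuousOn_const
    (continuous_const.sub continuous_coupler).continuousOn fun _ ↦ neg_one_ne_one_sub_coupler

lemma exists_dist_placement_five_six_eq_one :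
    ∃ x ∈ Ico (7 / 8 : ℝ) 1, dist (placement x 5) (placement x 6) = 1 := by
  have hcont : ContinuousOn (fun x ↦ dist (placement x 5) (placement x 6)) (Icc (7 / 8) 1) := by
    have hcoupler := continuous_coupler
    have hpivot := continuousOn_pivot
    unfold placement
    fun_prop
  obtain ⟨x, hx, h⟩ := intermediate_value_Ico (by norm_num) hcont
    ⟨dist_placement_five_six_seven_eighths_le_one, one_lt_dist_placement_five_six_one⟩
  exact ⟨x, hx, h⟩

lemma dist_placement_half_hexagon (x : ℝ) :
    dist (placement x 1) (placement x 2) = 1 ∧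
    dist (placement x 2) (placement x 3) = 1 ∧
    dist (placement x 3) (placement x 5) = 1 ∧
    dist (placement x 4) (placement x 5) = 1 ∧
    dist (placement x 1) (placement x 4) = 1 ∧
    dist (placement x 2) (placement x 4) = 1 ∧
    dist (placement x 2) (placement x 5) = 1 := by
  have hcube : sixthRoot * (sixthRoot * sixthRoot) = -1 := by
    linear_combination (sixthRoot + 1) * sixthRoot_mul_self
  simp only [placement]
  refine ⟨by simp, by simp, ?_, ?_, ?_, ?_, ?_⟩
  · simpa using dist_sixthRoot_mul 1
  · rw [dist_comm, dist_sixthRoot_mul, norm_sixthRoot]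
  · rw [dist_comm, ← hcube, dist_sixthRoot_mul, norm_mul, norm_sixthRoot, one_mul]
  · rw [dist_zero_left, norm_mul, norm_sixthRoot, one_mul]
  · rw [dist_zero_left, norm_sixthRoot]

lemma dist_placement_rhombus (hx : x ^ 2 ≤ 1) :
    dist (placement x 6) (placement x 8) = 1 ∧
    dist (placement x 7) (placement x 8) = 1 ∧
    dist (placement x 7) (placement x 9) = 1 ∧
    dist (placement x 6) (placement x 9) = 1 ∧
    dist (placement x 8) (placement x 9) = 1 := by
  have hc := norm_coupler hx
  simp only [placement]
  refine ⟨?_, ?_, ?_, ?_, ?_⟩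
  · rw [dist_self_add_left, norm_mul, norm_mul, norm_sixthRoot, hc, one_mul, one_mul]
  · rw [dist_self_add_left, hc]
  · rw [dist_add_left, dist_sixthRoot_mul, hc]
  · rw [dist_add_left, dist_comm, dist_sixthRoot_mul, norm_mul, norm_sixthRoot, hc, one_mul]
  · rw [dist_self_add_right, norm_mul, norm_sixthRoot, hc, one_mul]

lemma dist_placement_one_eight (hx : x ∈ Icc (7 / 8) 1) :
    dist (placement x 1) (placement x 8) = 1 :=
  dist_isoscelesApex_left (neg_one_ne_one_sub_coupler hx) (dist_neg_one_one_sub_coupler_le hx)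

lemma dist_placement_three_seven (hx : x ∈ Icc (7 / 8) 1) :
    dist (placement x 3) (placement x 7) = 1 := by
  have h : dist (1 - coupler x) (pivot x) = 1 :=
    dist_isoscelesApex_right (neg_one_ne_one_sub_coupler hx) (dist_neg_one_one_sub_coupler_le hx)
  rw [← h, placement, placement, dist_eq, dist_eq, sub_sub, add_comm]

end Linkage

end

theorem H1_unit_distance :
    ∃ φ : ℕ → EuclideanSpace ℝ (Fin 2),
      Set.InjOn φ (Set.Icc 1 9) ∧
      dist (φ 1) (φ 2) = 1 ∧
      dist (φ 2) (φ 3) = 1 ∧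
      dist (φ 3) (φ 5) = 1 ∧
      dist (φ 4) (φ 5) = 1 ∧
      dist (φ 1) (φ 4) = 1 ∧
      dist (φ 2) (φ 4) = 1 ∧
      dist (φ 2) (φ 5) = 1 ∧
      dist (φ 5) (φ 6) = 1 ∧
      dist (φ 6) (φ 8) = 1 ∧
      dist (φ 7) (φ 8) = 1 ∧
      dist (φ 7) (φ 9) = 1 ∧
      dist (φ 6) (φ 9) = 1 ∧
      dist (φ 8) (φ 9) = 1 ∧
      dist (φ 1) (φ 8) = 1 ∧
      dist (φ 3) (φ 7) = 1 := by
  obtain ⟨x, hx, h₅₆⟩ := exists_dist_placement_five_six_eq_one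
  have hx' := Set.Ico_subset_Icc_self hx
  obtain ⟨h₁₂, h₂₃, h₃₅, h₄₅, h₁₄, h₂₄, h₂₅⟩ := dist_placement_half_hexagon x
  obtain ⟨h₆₈, h₇₈, h₇₉, h₆₉, h₈₉⟩ := dist_placement_rhombus (sq_le_one_of_mem_Icc hx')
  have h₁₈ := dist_placement_one_eight hx'
  have h₃₇ := dist_placement_three_seven hx'
  let e := Complex.orthonormalBasisOneI.repr
  refine ⟨fun i ↦ e (placement x i), e.injective.comp_injOn (injOn_placement hx), ?_⟩
  simp only [LinearIsometryEquiv.dist_map]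
  exact ⟨h₁₂, h₂₃, h₃₅, h₄₅, h₁₄, h₂₄, h₂₅, h₅₆, h₆₈, h₇₈, h₇₉, h₆₉, h₈₉, h₁₈, h₃₇⟩
end
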